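/- The assignment D ↦ φ̄_D, where φ̄_D([a ⊗ b^op]) = D(a)b, is an R-module isomorphism Diff^k(B) ≅ Hom_{B̄}(J^k(B), B), where Hom_{B̄}(J^k(B), B) denotes the R-module of R-linear maps φ̄ : J^k(B) → B satisfying φ̄((1 ⊗ c^op)·m) = φ̄(m)·c for all c ∈ B and m ∈ J^k(B), and B is viewed with its right regular multiplication. The inverse isomorphism sends φ̄ to the differential operator D_φ̄(a) := φ̄([a ⊗ 1^op]). -/

import Mathlib

open TensorProduct MulOpposite

/-- The universal differential `da = 1 ⊗ aᵒᵖ - a ⊗ 1` in `Bᵉ = B ⊗[R] Bᵐᵒᵖ`. -/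
noncomputable def duniv (R : Type*) {B : Type*} [CommRing R] [Ring B] [Algebra R B] (a : B) :
    B ⊗[R] Bᵐᵒᵖ :=
  (1 : B) ⊗ₜ[R] op a - a ⊗ₜ[R] (1 : Bᵐᵒᵖ)

/-- `δ_b`, as a linear endomorphism of `End_R(B)`: `δ_b(D)(a) = D(a) * b - D(a * b)`. -/
noncomputable def deltaL (R : Type*) {B : Type*} [CommRing R] [Ring B] [Algebra R B] (b : B) :
    (B →ₗ[R] B) →ₗ[R] (B →ₗ[R] B) :=
  LinearMap.llcomp R B B B (LinearMap.mulRight R b) - LinearMap.lcomp R B (LinearMap.mulRight R b)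

/-- The left ideal (here: `R`-submodule) `μ_k` of `Bᵉ`, spanned by all products
`(a ⊗ bᵒᵖ) · da₀ ⋯ da_k`. -/
noncomputable def muk (R : Type*) (B : Type*) [CommRing R] [Ring B] [Algebra R B] (k : ℕ) :
    Submodule R (B ⊗[R] Bᵐᵒᵖ) :=
  Submodule.span R
    {z | ∃ (a b : B) (f : Fin (k + 1) → B),
      z = (a ⊗ₜ[R] op b) * (List.ofFn fun i => duniv R (f i)).prod}

/-- The submodule `Diff^k(B)` of differential operators of order `k`. -/
noncomputable def Diffk (R : Type*) (B : Type*) [CommRing R] [Ring B] [Algebra R B] (k : ℕ) :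
    Submodule R (B →ₗ[R] B) :=
  ⨅ f : Fin (k + 1) → B,
    LinearMap.ker ((List.ofFn f).foldr (fun b L => deltaL R b ∘ₗ L) LinearMap.id)

/-- The submodule of right `B`-linear maps `J^k(B) → B`, i.e. `R`-linear maps `g`
with `g ((1 ⊗ cᵒᵖ)·m) = g m * c`. -/
noncomputable def HomBbar (R : Type*) (B : Type*) [CommRing R] [Ring B] [Algebra R B] (k : ℕ) :
    Submodule R (((B ⊗[R] Bᵐᵒᵖ) ⧸ muk R B k) →ₗ[R] B) where
  carrier := {g | ∀ (c : B) (z : B ⊗[R] Bᵐᵒᵖ),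
    g ((muk R B k).mkQ (((1 : B) ⊗ₜ[R] op c) * z)) = g ((muk R B k).mkQ z) * c}
  add_mem' := by
    intro g g' hg hg' c z
    simp only [LinearMap.add_apply, hg c z, hg' c z, add_mul]
  zero_mem' := by
    intro c z
    simp
  smul_mem' := by
    intro r g hg c z
    simp only [LinearMap.smul_apply, hg c z, smul_mul_assoc]

/-!
An `R`-linear map `D` is the same as a right `B`-linear map `φ_D : Bᵉ → B`, namely
`φ_D (a ⊗ bᵒᵖ) = D a * b`, with inverse `φ ↦ φ (· ⊗ 1)`. Right multiplication by `db` on `Bᵉ` is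
adjoint to `δ_b`, that is `φ_D (z * db) = φ_{δ_b D} z`. Hence `φ_D` kills the generators
`(a ⊗ bᵒᵖ) * da₀ ⋯ da_k` of `μ_k` precisely when every `δ_{a₀} ⋯ δ_{a_k} D` vanishes, so it descends
to `J^k(B)` precisely when `D` is a differential operator of order `k`.
-/

section RightLinearExtension

variable {R B M : Type*} [CommSemiring R] [Semiring B] [Algebra R B] [AddCommMonoid M]
  [Module R M] [Module Bᵐᵒᵖ M] [IsScalarTower R Bᵐᵒᵖ M]

/-- The right `B`-linear extension `φ_D : Bᵉ → M`, `a ⊗ bᵒᵖ ↦ D a · b`, of an `R`-linear map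
`D : B → M` into a right `B`-module, encoded as a left `Bᵐᵒᵖ`-module. For `M = B` it induces the
map `φ̄_D` on jets. -/
noncomputable def jetPairing (D : B →ₗ[R] M) : B ⊗[R] Bᵐᵒᵖ →ₗ[R] M :=
  TensorProduct.lift ((Algebra.lsmul R R M).toLinearMap.flip ∘ₗ D)

@[simp]
theorem jetPairing_tmul (D : B →ₗ[R] M) (a : B) (b : Bᵐᵒᵖ) :
    jetPairing D (a ⊗ₜ[R] b) = b • D a :=
  rfl

theorem jetPairing_one_tmul_mul (D : B →ₗ[R] M) (c : Bᵐᵒᵖ) (z : B ⊗[R] Bᵐᵒᵖ) :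
    jetPairing D ((1 ⊗ₜ[R] c) * z) = c • jetPairing D z := by
  induction z with
  | zero => simp
  | add x y hx hy => rw [mul_add, map_add, map_add, hx, hy, smul_add]
  | tmul a b => simp [mul_smul]

theorem jetPairing_comp_includeLeft (D : B →ₗ[R] M) :
    jetPairing D ∘ₗ (Algebra.TensorProduct.includeLeft : B →ₐ[R] B ⊗[R] Bᵐᵒᵖ).toLinearMap = D :=
  LinearMap.ext fun a => one_smul Bᵐᵒᵖ (D a)

theorem jetPairing_eq_zero_iff {D : B →ₗ[R] M} : jetPairing D = 0 ↔ D = 0 := by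
  constructor
  · intro h
    rw [← jetPairing_comp_includeLeft D, h, LinearMap.zero_comp]
  · rintro rfl
    exact TensorProduct.ext' fun _ b => smul_zero b

theorem jetPairing_comp_includeLeft_of_map_one_tmul_mul {φ : B ⊗[R] Bᵐᵒᵖ →ₗ[R] M}
    (hφ : ∀ c z, φ ((1 ⊗ₜ[R] c) * z) = c • φ z) :
    jetPairing (φ ∘ₗ Algebra.TensorProduct.includeLeft.toLinearMap) = φ :=
  TensorProduct.ext' fun a b => by simpa using (hφ b (a ⊗ₜ[R] 1)).symm

end RightLinearExtension

section Jets

variable {R B : Type*} [CommRing R] [Ring B] [Algebra R B]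

@[simp]
theorem deltaL_apply (b : B) (D : B →ₗ[R] B) (a : B) :
    deltaL R b D a = D a * b - D (a * b) :=
  rfl

theorem jetPairing_mul_duniv (D : B →ₗ[R] B) (b : B) (z : B ⊗[R] Bᵐᵒᵖ) :
    jetPairing D (z * duniv R b) = jetPairing (deltaL R b D) z := by
  induction z with
  | zero => simp
  | add x y hx hy => rw [add_mul, map_add, map_add, hx, hy]
  | tmul a c => simp [duniv, mul_sub, sub_mul, mul_assoc]

theorem jetPairing_mul_prod_duniv (D : B →ₗ[R] B) (l : List B) (z : B ⊗[R] Bᵐᵒᵖ) :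
    jetPairing D (z * (l.map (duniv R)).prod) =
      jetPairing (l.foldr (fun b L => deltaL R b ∘ₗ L) LinearMap.id D) z := by
  induction l generalizing z with
  | nil => simp
  | cons b l ih =>
    rw [List.map_cons, List.prod_cons, ← mul_assoc, ih, jetPairing_mul_duniv]
    rfl

theorem mem_diffk_iff {k : ℕ} {D : B →ₗ[R] B} :
    D ∈ Diffk R B k ↔ ∀ (f : Fin (k + 1) → B) (z : B ⊗[R] Bᵐᵒᵖ),
      jetPairing D (z * (List.ofFn fun i => duniv R (f i)).prod) = 0 := by
  have ofFn_duniv (f : Fin (k + 1) → B) :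
      (List.ofFn fun i => duniv R (f i)) = (List.ofFn f).map (duniv R) := by
    rw [List.map_ofFn, Function.comp_def]
  simp only [Diffk, Submodule.mem_iInf, LinearMap.mem_ker, ofFn_duniv, jetPairing_mul_prod_duniv]
  refine forall_congr' fun f => ?_
  rw [← jetPairing_eq_zero_iff, LinearMap.ext_iff]
  rfl

theorem muk_le_ker_jetPairing_iff {k : ℕ} {D : B →ₗ[R] B} :
    muk R B k ≤ LinearMap.ker (jetPairing D) ↔ D ∈ Diffk R B k := by
  rw [mem_diffk_iff, muk, Submodule.span_le]
  constructor
  · intro h f z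
    induction z with
    | zero => simp
    | add x y hx hy => rw [add_mul, map_add, hx, hy, add_zero]
    | tmul a b => exact h ⟨a, unop b, f, rfl⟩
  · rintro h _ ⟨a, b, f, rfl⟩
    exact h f (a ⊗ₜ[R] op b)

theorem jetPairing_comp_mkQ_comp_includeLeft {k : ℕ}
    {g : ((B ⊗[R] Bᵐᵒᵖ) ⧸ muk R B k) →ₗ[R] B} (hg : g ∈ HomBbar R B k) :
    jetPairing ((g ∘ₗ (muk R B k).mkQ) ∘ₗ Algebra.TensorProduct.includeLeft.toLinearMap) =
      g ∘ₗ (muk R B k).mkQ :=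
  jetPairing_comp_includeLeft_of_map_one_tmul_mul fun c => hg (unop c)

theorem comp_mkQ_comp_includeLeft_mem_diffk {k : ℕ}
    {g : ((B ⊗[R] Bᵐᵒᵖ) ⧸ muk R B k) →ₗ[R] B} (hg : g ∈ HomBbar R B k) :
    (g ∘ₗ (muk R B k).mkQ) ∘ₗ Algebra.TensorProduct.includeLeft.toLinearMap ∈ Diffk R B k := by
  rw [← muk_le_ker_jetPairing_iff, jetPairing_comp_mkQ_comp_includeLeft hg]
  simpa using LinearMap.ker_le_ker_comp (muk R B k).mkQ g

theorem liftQ_jetPairing_mem_homBbar {k : ℕ} {D : B →ₗ[R] B}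
    (hD : muk R B k ≤ LinearMap.ker (jetPairing D)) :
    (muk R B k).liftQ (jetPairing D) hD ∈ HomBbar R B k :=
  fun c z => jetPairing_one_tmul_mul D (op c) z

/-- The isomorphism `Hom_{B̄}(J^k(B), B) ≅ Diff^k(B)`, `φ̄ ↦ D_φ̄`, with inverse `D ↦ φ̄_D`. It is
oriented from functionals to operators because `φ̄ ↦ D_φ̄` is visibly linear. -/
noncomputable def homBbarEquivDiffk (R B : Type*) [CommRing R] [Ring B] [Algebra R B] (k : ℕ) :
    HomBbar R B k ≃ₗ[R] Diffk R B k where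
  toFun g := ⟨_, comp_mkQ_comp_includeLeft_mem_diffk g.2⟩
  invFun D := ⟨_, liftQ_jetPairing_mem_homBbar (muk_le_ker_jetPairing_iff.mpr D.2)⟩
  map_add' _ _ := rfl
  map_smul' _ _ := rfl
  left_inv g := Subtype.ext <| Submodule.linearMap_qext _ <|
    (Submodule.liftQ_mkQ _ _ _).trans (jetPairing_comp_mkQ_comp_includeLeft g.2)
  right_inv D := Subtype.ext (jetPairing_comp_includeLeft D.1)

end Jets

theorem stmt3 {R B : Type*} [CommRing R] [Ring B] [Algebra R B] (k : ℕ) :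
    ∃ e : Diffk R B k ≃ₗ[R] HomBbar R B k,
      (∀ (D : Diffk R B k) (a b : B),
        (e D : ((B ⊗[R] Bᵐᵒᵖ) ⧸ muk R B k) →ₗ[R] B) ((muk R B k).mkQ (a ⊗ₜ[R] op b)) =
          (D : B →ₗ[R] B) a * b) ∧
      (∀ (g : HomBbar R B k) (a : B),
        (e.symm g : B →ₗ[R] B) a =
          (g : ((B ⊗[R] Bᵐᵒᵖ) ⧸ muk R B k) →ₗ[R] B)
            ((muk R B k).mkQ (a ⊗ₜ[R] (1 : Bᵐᵒᵖ)))) :=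
  ⟨(homBbarEquivDiffk R B k).symm, fun _ _ _ => rfl, fun _ _ => rfl⟩
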